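/- Let (X,f) be a TDS and φ, ψ ∈ C(X,ℝ) with ψ > 0. Then P_ψ(φ) = inf{ β ∈ ℝ : P(φ − βψ) ≤ 0 } = sup{ β ∈ ℝ : P(φ − βψ) ≥ 0 }. -/

import Mathlib

open MeasureTheory Filter Topology Set

variable {X : Type*}

/-- Birkhoff sum `S_n φ (x) = ∑_{i<n} φ(f^i x)`. -/
noncomputable def birkhoff (f : X → X) (φ : X → ℝ) (n : ℕ) (x : X) : ℝ :=
  ∑ i ∈ Finset.range n, φ (f^[i] x)

/-- The `n`-th Bowen metric. -/
noncomputable def dynDist [MetricSpace X] (f : X → X) (n : ℕ) (x y : X) : ℝ :=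
  ⨆ i : Fin n, dist (f^[(i : ℕ)] x) (f^[(i : ℕ)] y)

/-- `F` is an `(n,ε)`-spanning set of `Z`. -/
def IsSpanningSet [MetricSpace X] (f : X → X) (n : ℕ) (ε : ℝ) (Z : Set X) (F : Finset X) : Prop :=
  ∀ y ∈ Z, ∃ x ∈ F, dynDist f n x y ≤ ε

/-- `E` is `(n,ε)`-separated. -/
def IsSeparatedSet [MetricSpace X] (f : X → X) (n : ℕ) (ε : ℝ) (E : Finset X) : Prop :=
  ∀ x ∈ E, ∀ y ∈ E, x ≠ y → ε < dynDist f n x y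

/-- `S_T = {n : ∃ x, S_n ψ(x) ≤ T < S_{n+1} ψ(x)}`. -/
def STset (f : X → X) (ψ : X → ℝ) (T : ℝ) : Set ℕ :=
  {n | ∃ x : X, birkhoff f ψ n x ≤ T ∧ T < birkhoff f ψ (n + 1) x}

/-- `X_n = {x : S_n ψ(x) ≤ T < S_{n+1} ψ(x)}`. -/
def Xset (f : X → X) (ψ : X → ℝ) (T : ℝ) (n : ℕ) : Set X :=
  {x | birkhoff f ψ n x ≤ T ∧ T < birkhoff f ψ (n + 1) x}

/-- `Q_{ψ,T}(f,φ,ε)`, the spanning-set quantity. -/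
noncomputable def Qspan [MetricSpace X] (f : X → X) (φ ψ : X → ℝ) (T ε : ℝ) : ℝ :=
  sInf { r : ℝ | ∃ F : ℕ → Finset X,
    (∀ n ∈ STset f ψ T, IsSpanningSet f n ε (Xset f ψ T n) (F n)) ∧
    r = ∑' n : ℕ, Set.indicator (STset f ψ T)
        (fun n => ∑ x ∈ F n, Real.exp (birkhoff f φ n x)) n }

/-- `P_{ψ,T}(f,φ,ε)`, the separated-set quantity. -/
noncomputable def Psep [MetricSpace X] (f : X → X) (φ ψ : X → ℝ) (T ε : ℝ) : ℝ :=
  sSup { r : ℝ | ∃ E : ℕ → Finset X,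
    (∀ n ∈ STset f ψ T, (E n : Set X) ⊆ Xset f ψ T n ∧ IsSeparatedSet f n ε (E n)) ∧
    r = ∑' n : ℕ, Set.indicator (STset f ψ T)
        (fun n => ∑ x ∈ E n, Real.exp (birkhoff f φ n x)) n }

/-- The `ψ`-induced topological pressure of `φ`. -/
noncomputable def inducedPressure [MetricSpace X] (f : X → X) (φ ψ : X → ℝ) : EReal :=
  ⨆ (ε : ℝ) (_ : 0 < ε),
    Filter.limsup (fun T : ℝ => ((T⁻¹ * Real.log (Qspan f φ ψ T ε) : ℝ) : EReal)) atTop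

/-- Largest sum over `(n,ε)`-separated sets of `X`. -/
noncomputable def sepSum [MetricSpace X] (f : X → X) (φ : X → ℝ) (n : ℕ) (ε : ℝ) : ℝ :=
  sSup { r : ℝ | ∃ E : Finset X, IsSeparatedSet f n ε E ∧
    r = ∑ x ∈ E, Real.exp (birkhoff f φ n x) }

/-- The classical (Walters) topological pressure. -/
noncomputable def topPressure [MetricSpace X] (f : X → X) (φ : X → ℝ) : EReal :=
  ⨆ (ε : ℝ) (_ : 0 < ε),
    Filter.limsup (fun n : ℕ => (((n : ℝ)⁻¹ * Real.log (sepSum f φ n ε) : ℝ) : EReal)) atTop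

theorem birkhoff_succ (f : X → X) (φ : X → ℝ) (n : ℕ) (x : X) :
    birkhoff f φ (n + 1) x = birkhoff f φ n x + φ (f^[n] x) :=
  Finset.sum_range_succ _ _

theorem birkhoff_sub_const_mul (f : X → X) (φ ψ : X → ℝ) (β : ℝ) (n : ℕ) (x : X) :
    birkhoff f (fun x => φ x - β * ψ x) n x = birkhoff f φ n x - β * birkhoff f ψ n x := by
  simp [birkhoff, Finset.sum_sub_distrib, Finset.mul_sum]

theorem mul_le_birkhoff (f : X → X) {ψ : X → ℝ} {m : ℝ} (h : ∀ x, m ≤ ψ x) (n : ℕ) (x : X) :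
    n * m ≤ birkhoff f ψ n x := by
  simpa [birkhoff] using Finset.sum_le_sum (s := Finset.range n) fun i _ => h (f^[i] x)

theorem birkhoff_le_mul (f : X → X) {ψ : X → ℝ} {M : ℝ} (h : ∀ x, ψ x ≤ M) (n : ℕ) (x : X) :
    birkhoff f ψ n x ≤ n * M := by
  simpa [birkhoff] using Finset.sum_le_sum (s := Finset.range n) fun i _ => h (f^[i] x)

theorem mul_le_of_mem_STset {f : X → X} {ψ : X → ℝ} {m T : ℝ} (h : ∀ x, m ≤ ψ x) {n : ℕ}
    (hn : n ∈ STset f ψ T) : n * m ≤ T := by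
  obtain ⟨x, hx, -⟩ := hn
  exact (mul_le_birkhoff f h n x).trans hx

theorem lt_mul_of_mem_STset {f : X → X} {ψ : X → ℝ} {M T : ℝ} (h : ∀ x, ψ x ≤ M) {n : ℕ}
    (hn : n ∈ STset f ψ T) : T < (n + 1) * M := by
  obtain ⟨x, -, hx⟩ := hn
  simpa using hx.trans_le (birkhoff_le_mul f h (n + 1) x)

theorem STset_subset_range {f : X → X} {ψ : X → ℝ} {m T : ℝ} (hm : 0 < m) (h : ∀ x, m ≤ ψ x) :
    STset f ψ T ⊆ Finset.range (⌊T / m⌋₊ + 1) := by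
  intro n hn
  have := mul_le_of_mem_STset h hn
  simp only [Finset.coe_range, Set.mem_Iio, Nat.lt_succ_iff]
  exact Nat.le_floor ((le_div_iff₀ hm).2 this)

theorem exists_mem_Xset {f : X → X} {ψ : X → ℝ} {m T : ℝ} (hm : 0 < m) (h : ∀ x, m ≤ ψ x)
    (hT : 0 ≤ T) (x : X) : ∃ n, x ∈ Xset f ψ T n := by
  classical
  have hex : ∃ n : ℕ, T < birkhoff f ψ (n + 1) x := by
    obtain ⟨n, hn⟩ := exists_nat_gt (T / m)
    refine ⟨n, ?_⟩
    have h1 := mul_le_birkhoff f h (n + 1) x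
    rw [div_lt_iff₀ hm] at hn
    push_cast at h1
    nlinarith
  refine ⟨Nat.find hex, ?_, Nat.find_spec hex⟩
  rcases hk : Nat.find hex with _ | k
  · simpa [birkhoff] using hT
  · exact not_lt.1 (Nat.find_min hex (m := k) (by omega))

theorem abs_birkhoff_sub_le {f : X → X} {ψ : X → ℝ} {M T : ℝ} (h : ∀ x, ψ x ≤ M) {n : ℕ} {x : X}
    (hx : x ∈ Xset f ψ T n) : |birkhoff f ψ n x - T| ≤ M := by
  obtain ⟨h1, h2⟩ := hx
  rw [birkhoff_succ] at h2
  have := h (f^[n] x)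
  rw [abs_le]
  constructor <;> linarith

theorem abs_mul_birkhoff_sub_le {f : X → X} {ψ : X → ℝ} {M T : ℝ} (h : ∀ x, ψ x ≤ M) {n : ℕ}
    {x : X} (hx : x ∈ Xset f ψ T n) (β : ℝ) : |β * birkhoff f ψ n x - β * T| ≤ |β| * M := by
  rw [← mul_sub, abs_mul]
  exact mul_le_mul_of_nonneg_left (abs_birkhoff_sub_le h hx) (abs_nonneg β)

theorem indicator_sum_exp_nonneg (f : X → X) (φ ψ : X → ℝ) (T : ℝ) (F : ℕ → Finset X) (n : ℕ) :
    0 ≤ (STset f ψ T).indicator (fun n => ∑ x ∈ F n, Real.exp (birkhoff f φ n x)) n :=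
  Set.indicator_nonneg (fun _ _ => Finset.sum_nonneg fun _ _ => (Real.exp_pos _).le) n

theorem sum_le_tsum_indicator {f : X → X} (φ : X → ℝ) {ψ : X → ℝ} {m T : ℝ} (hm : 0 < m)
    (h : ∀ x, m ≤ ψ x) (F : ℕ → Finset X) {n : ℕ} (hn : n ∈ STset f ψ T) :
    ∑ x ∈ F n, Real.exp (birkhoff f φ n x) ≤
      ∑' n, (STset f ψ T).indicator (fun n => ∑ x ∈ F n, Real.exp (birkhoff f φ n x)) n := by
  have hs : Summable
      ((STset f ψ T).indicator fun n => ∑ x ∈ F n, Real.exp (birkhoff f φ n x)) :=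
    summable_of_hasFiniteSupport
      (((Finset.finite_toSet _).subset (STset_subset_range hm h)).subset
        Set.support_indicator_subset)
  have := hs.le_tsum n fun j _ => indicator_sum_exp_nonneg f φ ψ T F j
  rwa [Set.indicator_of_mem hn] at this

theorem tsum_indicator_le {f : X → X} (φ : X → ℝ) {ψ : X → ℝ} {m T B : ℝ} (hm : 0 < m)
    (h : ∀ x, m ≤ ψ x) (hT : 0 ≤ T) (hB : 0 ≤ B) (F : ℕ → Finset X)
    (hF : ∀ n ∈ STset f ψ T, ∑ x ∈ F n, Real.exp (birkhoff f φ n x) ≤ B) :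
    ∑' n, (STset f ψ T).indicator (fun n => ∑ x ∈ F n, Real.exp (birkhoff f φ n x)) n ≤
      (T / m + 1) * B := by
  rw [tsum_eq_sum (s := Finset.range (⌊T / m⌋₊ + 1)) fun n hn =>
    Set.indicator_of_notMem (fun hn' => hn (STset_subset_range hm h hn')) _]
  calc _ ≤ ∑ _n ∈ Finset.range (⌊T / m⌋₊ + 1), B := by
        refine Finset.sum_le_sum fun n _ => ?_
        by_cases hn : n ∈ STset f ψ T
        · rw [Set.indicator_of_mem hn]
          exact hF n hn
        · rwa [Set.indicator_of_notMem hn]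
    _ = (⌊T / m⌋₊ + 1) * B := by simp
    _ ≤ (T / m + 1) * B := by
        gcongr
        exact Nat.floor_le (by positivity)

section BowenMetric

variable [MetricSpace X]

theorem dist_le_dynDist (f : X → X) {n i : ℕ} (hi : i < n) (x y : X) :
    dist (f^[i] x) (f^[i] y) ≤ dynDist f n x y :=
  le_ciSup (f := fun i : Fin n => dist (f^[(i : ℕ)] x) (f^[(i : ℕ)] y))
    (Set.finite_range _).bddAbove ⟨i, hi⟩

theorem dynDist_nonneg (f : X → X) (n : ℕ) (x y : X) : 0 ≤ dynDist f n x y :=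
  Real.iSup_nonneg fun _ => dist_nonneg

theorem dynDist_le {f : X → X} {n : ℕ} {x y : X} {r : ℝ} (hr : 0 ≤ r)
    (h : ∀ i < n, dist (f^[i] x) (f^[i] y) ≤ r) : dynDist f n x y ≤ r :=
  Real.iSup_le (fun i => h i i.2) hr

theorem dynDist_comm (f : X → X) (n : ℕ) (x y : X) : dynDist f n x y = dynDist f n y x := by
  simp only [dynDist, dist_comm]

theorem dynDist_self (f : X → X) (n : ℕ) (x : X) : dynDist f n x x = 0 := by
  simp [dynDist]

theorem dynDist_triangle (f : X → X) (n : ℕ) (x y z : X) :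
    dynDist f n x z ≤ dynDist f n x y + dynDist f n y z :=
  dynDist_le (add_nonneg (dynDist_nonneg ..) (dynDist_nonneg ..)) fun _ hi =>
    (dist_triangle _ _ _).trans (add_le_add (dist_le_dynDist f hi _ _) (dist_le_dynDist f hi _ _))

theorem exists_isSpanningSet_univ [CompactSpace X] {f : X → X} (hf : Continuous f) (n : ℕ) {ε : ℝ}
    (hε : 0 < ε) : ∃ F : Finset X, IsSpanningSet f n ε univ F := by
  let U : X → Set X := fun x => ⋂ i ∈ Finset.range n, {y | dist (f^[i] x) (f^[i] y) < ε}
  have hU : ∀ x, U x ∈ 𝓝 x := fun x => by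
    refine (Filter.biInter_finset_mem _).2 fun i _ => ?_
    refine (isOpen_lt (continuous_const.dist (hf.iterate i)) continuous_const).mem_nhds ?_
    simpa using hε
  obtain ⟨F, -, hF⟩ := isCompact_univ.elim_nhds_subcover U fun x _ => hU x
  refine ⟨F, fun y hy => ?_⟩
  obtain ⟨x, hx, hxy⟩ := mem_iUnion₂.1 (hF hy)
  refine ⟨x, hx, dynDist_le hε.le fun i hi => ?_⟩
  exact (mem_iInter₂.1 hxy i (Finset.mem_range.2 hi)).le

/-- A separated set injects into any spanning set at half the scale, moving points little. -/
theorem IsSeparatedSet.exists_injOn {f : X → X} {n : ℕ} {ε δ : ℝ} (hδ : 2 * δ ≤ ε)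
    {E F : Finset X} {Z : Set X} (hE : IsSeparatedSet f n ε E) (hEZ : (E : Set X) ⊆ Z)
    (hF : IsSpanningSet f n δ Z F) :
    ∃ g : X → X, (∀ x ∈ E, g x ∈ F ∧ dynDist f n (g x) x ≤ δ) ∧ Set.InjOn g E := by
  have h : ∀ x, ∃ y, x ∈ E → y ∈ F ∧ dynDist f n y x ≤ δ := fun x => by
    by_cases hx : x ∈ E
    · obtain ⟨y, hy⟩ := hF x (hEZ hx)
      exact ⟨y, fun _ => hy⟩
    · exact ⟨x, fun h => absurd h hx⟩
  choose g hg using h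
  refine ⟨g, hg, fun x hx y hy hxy => ?_⟩
  by_contra hne
  have h1 := hE x hx y hy hne
  have h2 := dynDist_triangle f n x (g x) y
  have h3 := (hg x hx).2
  have h4 := (hg y hy).2
  rw [← hxy] at h4
  rw [dynDist_comm f n x (g x)] at h2
  linarith

theorem exists_card_le_of_isSeparatedSet [CompactSpace X] {f : X → X} (hf : Continuous f) (n : ℕ)
    {ε : ℝ} (hε : 0 < ε) : ∃ K : ℕ, ∀ E : Finset X, IsSeparatedSet f n ε E → E.card ≤ K := by
  obtain ⟨F, hF⟩ := exists_isSpanningSet_univ hf n (half_pos hε)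
  refine ⟨F.card, fun E hE => ?_⟩
  obtain ⟨g, hg, hinj⟩ := hE.exists_injOn (mul_div_cancel₀ ε two_ne_zero).le (subset_univ _) hF
  exact Finset.card_le_card_of_injOn g (fun x hx => (hg x hx).1) hinj

theorem exists_isSeparatedSet_isSpanningSet [CompactSpace X] {f : X → X} (hf : Continuous f)
    (n : ℕ) {ε : ℝ} (hε : 0 < ε) (Z : Set X) :
    ∃ E : Finset X, (E : Set X) ⊆ Z ∧ IsSeparatedSet f n ε E ∧ IsSpanningSet f n ε Z E := by
  classical
  obtain ⟨K, hK⟩ := exists_card_le_of_isSeparatedSet hf n hε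
  let P : ℕ → Prop := fun k => ∃ E : Finset X, (E : Set X) ⊆ Z ∧ IsSeparatedSet f n ε E ∧ E.card = k
  have hP0 : P 0 := ⟨∅, by simp, by simp [IsSeparatedSet], rfl⟩
  obtain ⟨E, hEZ, hE, hcard⟩ : P (Nat.findGreatest P K) := Nat.findGreatest_spec (Nat.zero_le K) hP0
  refine ⟨E, hEZ, hE, fun y hy => ?_⟩
  by_contra! hfar
  have hyE : y ∉ E := fun h => by
    have := hfar y h
    rw [dynDist_self] at this
    exact absurd this hε.not_gt
  have hsep : IsSeparatedSet f n ε (insert y E) := by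
    intro a ha b hb hab
    rcases Finset.mem_insert.1 ha with rfl | haE <;>
      rcases Finset.mem_insert.1 hb with rfl | hbE
    · exact absurd rfl hab
    · rw [dynDist_comm]
      exact hfar b hbE
    · exact hfar a haE
    · exact hE a haE b hbE hab
  have hP : P (E.card + 1) := by
    refine ⟨insert y E, ?_, hsep, Finset.card_insert_of_notMem hyE⟩
    rw [Finset.coe_insert]
    exact Set.insert_subset hy hEZ
  have hle : E.card + 1 ≤ K := by
    have := hK _ hsep
    rwa [Finset.card_insert_of_notMem hyE] at this
  have := Nat.le_findGreatest hle hP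
  omega

theorem sum_le_sepSum [CompactSpace X] {f : X → X} (hf : Continuous f) {φ : X → ℝ}
    (hφ : Continuous φ) {n : ℕ} {ε : ℝ} (hε : 0 < ε) {E : Finset X} (hE : IsSeparatedSet f n ε E) :
    ∑ x ∈ E, Real.exp (birkhoff f φ n x) ≤ sepSum f φ n ε := by
  obtain ⟨K, hK⟩ := exists_card_le_of_isSeparatedSet hf n hε
  obtain ⟨C, hC⟩ := isCompact_univ.bddAbove_image hφ.continuousOn
  have hC' : ∀ x, φ x ≤ C := fun x => hC ⟨x, mem_univ x, rfl⟩
  refine le_csSup ⟨K * Real.exp (n * C), ?_⟩ ⟨E, hE, rfl⟩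
  rintro _ ⟨G, hG, rfl⟩
  calc ∑ x ∈ G, Real.exp (birkhoff f φ n x) ≤ ∑ _x ∈ G, Real.exp (n * C) :=
        Finset.sum_le_sum fun x _ => Real.exp_le_exp.2 (birkhoff_le_mul f hC' n x)
    _ = G.card * Real.exp (n * C) := by simp
    _ ≤ K * Real.exp (n * C) := by
        gcongr
        exact hK G hG

theorem sepSum_pos [CompactSpace X] [Nonempty X] {f : X → X} (hf : Continuous f) {φ : X → ℝ}
    (hφ : Continuous φ) (n : ℕ) {ε : ℝ} (hε : 0 < ε) : 0 < sepSum f φ n ε := by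
  obtain ⟨x⟩ := ‹Nonempty X›
  refine lt_of_lt_of_le ?_ (sum_le_sepSum hf hφ hε (E := {x}) (n := n) ?_)
  · simpa using Real.exp_pos _
  · intro a ha b hb hab
    exact absurd ((Finset.mem_singleton.1 ha).trans (Finset.mem_singleton.1 hb).symm) hab

theorem Qspan_le_tsum (f : X → X) (φ ψ : X → ℝ) (T ε : ℝ) {F : ℕ → Finset X}
    (hF : ∀ n ∈ STset f ψ T, IsSpanningSet f n ε (Xset f ψ T n) (F n)) :
    Qspan f φ ψ T ε ≤
      ∑' n, (STset f ψ T).indicator (fun n => ∑ x ∈ F n, Real.exp (birkhoff f φ n x)) n := by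
  refine csInf_le ⟨0, ?_⟩ ⟨F, hF, rfl⟩
  rintro _ ⟨G, -, rfl⟩
  exact tsum_nonneg fun n => indicator_sum_exp_nonneg f φ ψ T G n

theorem Qspan_set_nonempty [CompactSpace X] {f : X → X} (hf : Continuous f) (φ ψ : X → ℝ)
    (T : ℝ) {ε : ℝ} (hε : 0 < ε) :
    { r : ℝ | ∃ F : ℕ → Finset X,
      (∀ n ∈ STset f ψ T, IsSpanningSet f n ε (Xset f ψ T n) (F n)) ∧
      r = ∑' n : ℕ, Set.indicator (STset f ψ T)
        (fun n => ∑ x ∈ F n, Real.exp (birkhoff f φ n x)) n }.Nonempty := by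
  choose F hF using fun n => exists_isSpanningSet_univ hf n hε
  exact ⟨_, F, fun n _ y _ => hF n y (mem_univ y), rfl⟩

theorem Qspan_pos [CompactSpace X] [Nonempty X] {f : X → X} (hf : Continuous f) {φ ψ : X → ℝ}
    (hφ : Continuous φ) {m T ε : ℝ} (hm : 0 < m) (h : ∀ x, m ≤ ψ x) (hT : 0 ≤ T) (hε : 0 < ε) :
    0 < Qspan f φ ψ T ε := by
  obtain ⟨x₀⟩ := ‹Nonempty X›
  obtain ⟨C, hC⟩ := isCompact_univ.bddBelow_image hφ.continuousOn
  have hC' : ∀ x, C ≤ φ x := fun x => hC ⟨x, mem_univ x, rfl⟩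
  obtain ⟨n, hn⟩ := exists_mem_Xset (f := f) hm h hT x₀
  refine (Real.exp_pos (n * C)).trans_le (le_csInf (Qspan_set_nonempty hf φ ψ T hε) ?_)
  rintro _ ⟨F, hF, rfl⟩
  have hnT : n ∈ STset f ψ T := ⟨x₀, hn⟩
  obtain ⟨y, hy, -⟩ := hF n hnT x₀ hn
  calc Real.exp (n * C) ≤ Real.exp (birkhoff f φ n y) :=
        Real.exp_le_exp.2 (mul_le_birkhoff f hC' n y)
    _ ≤ ∑ x ∈ F n, Real.exp (birkhoff f φ n x) :=
        Finset.single_le_sum (f := fun x => Real.exp (birkhoff f φ n x))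
          (fun _ _ => (Real.exp_pos _).le) hy
    _ ≤ _ := sum_le_tsum_indicator φ hm h F hnT

end BowenMetric

theorem eventually_affine_le_exp (a b : ℝ) {c : ℝ} (hc : 0 < c) :
    ∀ᶠ x : ℝ in atTop, a * x + b ≤ Real.exp (c * x) := by
  have h1 : (fun x : ℝ => a * x + b) =o[atTop] fun x => Real.exp (c * x) := by
    refine Asymptotics.IsLittleO.add ?_ ?_
    · simpa using (isLittleO_pow_exp_pos_mul_atTop 1 hc).const_mul_left a
    · simpa using (isLittleO_pow_exp_pos_mul_atTop 0 hc).const_mul_left b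
  filter_upwards [h1.bound one_pos] with x hx
  rw [one_mul, Real.norm_eq_abs, Real.norm_of_nonneg (Real.exp_pos _).le] at hx
  exact (le_abs_self _).trans hx

theorem inv_mul_log_le {T q c : ℝ} (hT : 0 < T) (hq : 0 < q) (h : q ≤ Real.exp (c * T)) :
    T⁻¹ * Real.log q ≤ c := by
  rw [inv_mul_le_iff₀ hT, mul_comm]
  exact (Real.log_le_iff_le_exp hq).2 h

theorem lt_exp_of_inv_mul_log_lt {T q c : ℝ} (hT : 0 < T) (h : T⁻¹ * Real.log q < c) :
    q < Real.exp (c * T) := by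
  rw [inv_mul_lt_iff₀ hT, mul_comm] at h
  exact Real.lt_exp_of_log_lt h

/-- If the induced pressure is below `β - δ`, sums over separated points with a prescribed return
time decay exponentially. -/
theorem sum_exp_birkhoff_le [MetricSpace X] [CompactSpace X] {f : X → X}
    {φ ψ : X → ℝ} {m M : ℝ} (hm : 0 < m) (hf : Continuous f) (hmψ : ∀ x, m ≤ ψ x)
    (hψM : ∀ x, ψ x ≤ M) {β δ η T ε ε₀ : ℝ} (hδ : 0 < δ) (hε : 0 < ε) (hεε₀ : 2 * ε ≤ ε₀)
    (hη : ∀ x y, dist x y ≤ ε → |φ x - φ y| ≤ η) {n : ℕ}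
    (hQ : Qspan f φ ψ T ε < Real.exp ((β - δ) * T)) {E : Finset X}
    (hEsep : IsSeparatedSet f n ε₀ E) (hE : (E : Set X) ⊆ Xset f ψ T n) :
    ∑ x ∈ E, Real.exp (birkhoff f (fun x => φ x - β * ψ x) n x) ≤
      Real.exp (|β| * M) * Real.exp (n * (η - δ * m)) := by
  rcases E.eq_empty_or_nonempty with rfl | ⟨x₀, hx₀⟩
  · simp only [Finset.sum_empty]
    positivity
  have hnT : n ∈ STset f ψ T := ⟨x₀, hE hx₀⟩
  have hTn := mul_le_of_mem_STset hmψ hnT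
  obtain ⟨_, ⟨F, hF, rfl⟩, hFlt⟩ := exists_lt_of_csInf_lt (Qspan_set_nonempty hf φ ψ T hε) hQ
  obtain ⟨g, hg, hinj⟩ := hEsep.exists_injOn hεε₀ hE (hF n hnT)
  have hclose : ∀ x ∈ E, birkhoff f φ n x ≤ n * η + birkhoff f φ n (g x) := by
    intro x hx
    have : ∑ i ∈ Finset.range n, φ (f^[i] x) ≤ ∑ i ∈ Finset.range n, (η + φ (f^[i] (g x))) := by
      refine Finset.sum_le_sum fun i hi => ?_
      have h1 := (dist_le_dynDist f (Finset.mem_range.1 hi) (g x) x).trans (hg x hx).2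
      have h2 := (abs_le.1 (hη _ _ h1)).1
      linarith
    simpa [birkhoff, Finset.sum_add_distrib] using this
  calc ∑ x ∈ E, Real.exp (birkhoff f (fun x => φ x - β * ψ x) n x)
      ≤ ∑ x ∈ E, Real.exp (|β| * M - β * T + n * η) * Real.exp (birkhoff f φ n (g x)) := by
        refine Finset.sum_le_sum fun x hx => ?_
        rw [← Real.exp_add, Real.exp_le_exp, birkhoff_sub_const_mul]
        have := (abs_le.1 (abs_mul_birkhoff_sub_le hψM (hE hx) β)).1
        linarith [hclose x hx]
    _ = Real.exp (|β| * M - β * T + n * η) * ∑ x ∈ E, Real.exp (birkhoff f φ n (g x)) :=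
        (Finset.mul_sum ..).symm
    _ ≤ Real.exp (|β| * M - β * T + n * η) * ∑ y ∈ F n, Real.exp (birkhoff f φ n y) := by
        classical
        gcongr
        rw [← Finset.sum_image (f := fun y => Real.exp (birkhoff f φ n y)) hinj]
        exact Finset.sum_le_sum_of_subset_of_nonneg
          (Finset.image_subset_iff.2 fun x hx => (hg x hx).1) fun _ _ _ => (Real.exp_pos _).le
    _ ≤ Real.exp (|β| * M - β * T + n * η) * Real.exp ((β - δ) * T) := by
        gcongr
        exact (sum_le_tsum_indicator φ hm hmψ F hnT).trans hFlt.le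
    _ ≤ Real.exp (|β| * M) * Real.exp (n * (η - δ * m)) := by
        rw [← Real.exp_add, ← Real.exp_add, Real.exp_le_exp]
        nlinarith [mul_le_mul_of_nonneg_left hTn hδ.le]

section Pressure

variable [MetricSpace X] [CompactSpace X] [Nonempty X] {f : X → X} {φ ψ : X → ℝ}

theorem inducedPressure_le_add (hf : Continuous f) (hφ : Continuous φ) (hψ : Continuous ψ)
    {m M : ℝ} (hm : 0 < m) (hmψ : ∀ x, m ≤ ψ x) (hψM : ∀ x, ψ x ≤ M) {β δ : ℝ} (hδ : 0 < δ)
    (hβ : topPressure f (fun x => φ x - β * ψ x) ≤ 0) :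
    inducedPressure f φ ψ ≤ ((β + δ : ℝ) : EReal) := by
  have hM : 0 < M := hm.trans_le ((hmψ (Classical.arbitrary X)).trans (hψM _))
  refine iSup₂_le fun ε hε => limsup_le_of_le (h := ?_)
  have hη : 0 < δ * m / 4 := by positivity
  have hlim : limsup (fun n : ℕ => (((n : ℝ)⁻¹ *
      Real.log (sepSum f (fun x => φ x - β * ψ x) n ε) : ℝ) : EReal)) atTop <
      ((δ * m / 4 : ℝ) : EReal) :=
    ((le_iSup₂ (f := fun (ε : ℝ) (_ : 0 < ε) => limsup (fun n : ℕ => (((n : ℝ)⁻¹ *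
      Real.log (sepSum f (fun x => φ x - β * ψ x) n ε) : ℝ) : EReal)) atTop) ε hε).trans
      hβ).trans_lt (by exact_mod_cast hη)
  obtain ⟨N, hN⟩ := eventually_atTop.1 (eventually_lt_of_limsup_lt hlim)
  have hcont : Continuous fun x => φ x - β * ψ x := by fun_prop
  filter_upwards [eventually_ge_atTop ((N + 2) * M), eventually_gt_atTop 0,
    eventually_affine_le_exp (Real.exp (|β| * M) / m) (Real.exp (|β| * M))
      (half_pos hδ)] with T hTN hT0 hTexp
  choose F hFZ hFsep hFspan using fun n =>
    exists_isSeparatedSet_isSpanningSet hf n hε (Xset f ψ T n)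
  have hsum : ∀ n ∈ STset f ψ T, ∑ x ∈ F n, Real.exp (birkhoff f φ n x) ≤
      Real.exp (|β| * M) * Real.exp ((β + δ / 2) * T) := by
    intro n hn
    have hnT := mul_le_of_mem_STset hmψ hn
    have hn1 : N + 1 ≤ n := by
      have := hTN.trans_lt (lt_mul_of_mem_STset hψM hn)
      have := lt_of_mul_lt_mul_right this hM.le
      have : (N + 1 : ℝ) < n := by linarith
      exact_mod_cast this.le
    have hsep : sepSum f (fun x => φ x - β * ψ x) n ε < Real.exp (δ * m / 4 * n) :=
      lt_exp_of_inv_mul_log_lt (by exact_mod_cast (by omega : 0 < n))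
        (by exact_mod_cast hN n (by omega))
    calc ∑ x ∈ F n, Real.exp (birkhoff f φ n x)
        ≤ ∑ x ∈ F n, Real.exp (|β| * M + β * T) *
            Real.exp (birkhoff f (fun x => φ x - β * ψ x) n x) := by
          refine Finset.sum_le_sum fun x hx => ?_
          rw [← Real.exp_add, Real.exp_le_exp, birkhoff_sub_const_mul]
          have := (abs_le.1 (abs_mul_birkhoff_sub_le hψM (hFZ n hx) β)).2
          linarith
      _ = Real.exp (|β| * M + β * T) *
            ∑ x ∈ F n, Real.exp (birkhoff f (fun x => φ x - β * ψ x) n x) :=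
          (Finset.mul_sum ..).symm
      _ ≤ Real.exp (|β| * M + β * T) * Real.exp (δ * m / 4 * n) := by
          gcongr
          exact (sum_le_sepSum hf hcont hε (hFsep n)).trans hsep.le
      _ ≤ Real.exp (|β| * M) * Real.exp ((β + δ / 2) * T) := by
          rw [← Real.exp_add, ← Real.exp_add, Real.exp_le_exp]
          nlinarith [mul_pos hδ hT0, mul_le_mul_of_nonneg_left hnT hδ.le]
  have hQ : Qspan f φ ψ T ε ≤ Real.exp ((β + δ) * T) :=
    calc Qspan f φ ψ T ε
        ≤ (T / m + 1) * (Real.exp (|β| * M) * Real.exp ((β + δ / 2) * T)) :=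
          (Qspan_le_tsum f φ ψ T ε fun n _ => hFspan n).trans
            (tsum_indicator_le φ hm hmψ hT0.le (by positivity) F hsum)
      _ = (Real.exp (|β| * M) / m * T + Real.exp (|β| * M)) * Real.exp ((β + δ / 2) * T) := by
          ring
      _ ≤ Real.exp (δ / 2 * T) * Real.exp ((β + δ / 2) * T) := by gcongr
      _ = Real.exp ((β + δ) * T) := by
          rw [← Real.exp_add]
          ring_nf
  exact_mod_cast inv_mul_log_le hT0 (Qspan_pos hf hφ hm hmψ hT0.le hε) hQ

theorem topPressure_neg_of_inducedPressure_lt (hf : Continuous f) (hφ : Continuous φ)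
    (hψ : Continuous ψ) {m M : ℝ} (hm : 0 < m) (hmψ : ∀ x, m ≤ ψ x) (hψM : ∀ x, ψ x ≤ M)
    {β δ : ℝ} (hδ : 0 < δ) (hβ : inducedPressure f φ ψ < ((β - δ : ℝ) : EReal)) :
    topPressure f (fun x => φ x - β * ψ x) < 0 := by
  classical
  have hcont : Continuous fun x => φ x - β * ψ x := by fun_prop
  have hδm : 0 < δ * m := by positivity
  refine lt_of_le_of_lt (b := ((-(δ * m / 4) : ℝ) : EReal)) ?_
    (by exact_mod_cast (by linarith : -(δ * m / 4) < 0))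
  refine iSup₂_le fun ε₀ hε₀ => limsup_le_of_le (h := ?_)
  obtain ⟨ε₁, hε₁, hunif⟩ := Metric.uniformContinuous_iff.1
    (CompactSpace.uniformContinuous_of_continuous hφ) (δ * m / 2) (by positivity)
  set ε := min (ε₁ / 2) (ε₀ / 2)
  have hε : 0 < ε := lt_min (half_pos hε₁) (half_pos hε₀)
  have hεε₀ : 2 * ε ≤ ε₀ := by linarith [min_le_right (ε₁ / 2) (ε₀ / 2)]
  have hη : ∀ x y, dist x y ≤ ε → |φ x - φ y| ≤ δ * m / 2 := fun x y hxy =>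
    (hunif (hxy.trans_lt (by linarith [min_le_left (ε₁ / 2) (ε₀ / 2)]))).le
  have hlim := (le_iSup₂ (f := fun (ε : ℝ) (_ : 0 < ε) => limsup (fun T : ℝ =>
    ((T⁻¹ * Real.log (Qspan f φ ψ T ε) : ℝ) : EReal)) atTop) ε hε).trans_lt hβ
  obtain ⟨T₀, hT₀⟩ := eventually_atTop.1 (eventually_lt_of_limsup_lt hlim)
  have hQ : ∀ T, T₀ ≤ T → 0 < T → Qspan f φ ψ T ε < Real.exp ((β - δ) * T) := fun T h1 h2 =>
    lt_exp_of_inv_mul_log_lt h2 (by exact_mod_cast hT₀ T h1)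
  filter_upwards [tendsto_natCast_atTop_atTop.eventually (eventually_affine_le_exp
      (Real.exp (|β| * M) * (M / m)) (Real.exp (|β| * M) * 2) (by positivity : 0 < δ * m / 4)),
    tendsto_natCast_atTop_atTop.eventually (eventually_ge_atTop (T₀ / m)),
    eventually_gt_atTop 0] with n hnexp hnT₀ hn0
  have hn0' : (0 : ℝ) < n := by exact_mod_cast hn0
  rw [div_le_iff₀ hm] at hnT₀
  have hM : 0 < M := hm.trans_le ((hmψ (Classical.arbitrary X)).trans (hψM _))
  have hsum : ∀ E : Finset X, IsSeparatedSet f n ε₀ E →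
      ∑ x ∈ E, Real.exp (birkhoff f (fun x => φ x - β * ψ x) n x) ≤
        Real.exp (-(δ * m / 4) * n) := by
    intro E hE
    set c : X → ℕ := fun x => ⌈birkhoff f ψ n x / m⌉₊
    set R := Finset.range (⌈n * M / m⌉₊ + 1) with hR
    have hcR : ∀ x ∈ E, c x ∈ R := fun x _ => by
      rw [hR, Finset.mem_range, Nat.lt_succ_iff]
      refine Nat.ceil_mono ?_
      gcongr
      exact birkhoff_le_mul f hψM n x
    have hfiber : ∀ k ∈ R, ∑ x ∈ E with c x = k,
        Real.exp (birkhoff f (fun x => φ x - β * ψ x) n x) ≤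
          Real.exp (|β| * M) * Real.exp (n * (δ * m / 2 - δ * m)) := by
      intro k _
      have hX : ∀ x, c x = k → x ∈ Xset f ψ (k * m) n := by
        rintro x rfl
        have hb : 0 ≤ birkhoff f ψ n x := le_trans (by positivity) (mul_le_birkhoff f hmψ n x)
        constructor
        · exact (div_le_iff₀ hm).1 (Nat.le_ceil _)
        · have h1 := Nat.ceil_lt_add_one (div_nonneg hb hm.le)
          have h2 := mul_lt_mul_of_pos_right h1 hm
          rw [add_mul, div_mul_cancel₀ _ hm.ne'] at h2
          rw [birkhoff_succ]
          linarith [hmψ (f^[n] x)]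
      rcases (E.filter fun x => c x = k).eq_empty_or_nonempty with hempty | ⟨x₀, hx₀⟩
      · rw [hempty, Finset.sum_empty]
        positivity
      have hnk : n * m ≤ k * m :=
        mul_le_of_mem_STset hmψ ⟨x₀, hX x₀ (Finset.mem_filter.1 hx₀).2⟩
      refine sum_exp_birkhoff_le hm hf hmψ hψM hδ hε hεε₀ hη (T := k * m)
        (hQ _ (hnT₀.trans hnk) ((by positivity : (0 : ℝ) < n * m).trans_le hnk)) ?_ ?_
      · exact fun a ha b hb => hE a (Finset.mem_filter.1 ha).1 b (Finset.mem_filter.1 hb).1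
      · exact fun x hx => hX x (Finset.mem_filter.1 hx).2
    calc ∑ x ∈ E, Real.exp (birkhoff f (fun x => φ x - β * ψ x) n x)
        = ∑ k ∈ R, ∑ x ∈ E with c x = k,
            Real.exp (birkhoff f (fun x => φ x - β * ψ x) n x) :=
          (Finset.sum_fiberwise_of_maps_to hcR _).symm
      _ ≤ ∑ _k ∈ R, Real.exp (|β| * M) * Real.exp (n * (δ * m / 2 - δ * m)) :=
          Finset.sum_le_sum hfiber
      _ = (⌈n * M / m⌉₊ + 1) * (Real.exp (|β| * M) * Real.exp (n * (δ * m / 2 - δ * m))) := by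
          simp [hR]
      _ ≤ (n * M / m + 2) * (Real.exp (|β| * M) * Real.exp (n * (δ * m / 2 - δ * m))) := by
          have := (Nat.ceil_lt_add_one (by positivity : 0 ≤ n * M / m)).le
          gcongr ?_ * _
          linarith
      _ = (Real.exp (|β| * M) * (M / m) * n + Real.exp (|β| * M) * 2) *
            Real.exp (n * (δ * m / 2 - δ * m)) := by ring
      _ ≤ Real.exp (δ * m / 4 * n) * Real.exp (n * (δ * m / 2 - δ * m)) := by gcongr
      _ = Real.exp (-(δ * m / 4) * n) := by
          rw [← Real.exp_add]
          ring_nf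
  have hsep : sepSum f (fun x => φ x - β * ψ x) n ε₀ ≤ Real.exp (-(δ * m / 4) * n) := by
    refine csSup_le ⟨_, ∅, by simp [IsSeparatedSet], rfl⟩ ?_
    rintro _ ⟨E, hE, rfl⟩
    exact hsum E hE
  exact_mod_cast inv_mul_log_le hn0' (sepSum_pos hf hcont n hε₀) hsep

end Pressure

/-- `P_ψ(φ) = inf{β : P(φ-βψ) ≤ 0} = sup{β : P(φ-βψ) ≥ 0}`. -/
theorem stmt9 [MetricSpace X] [CompactSpace X] [Nonempty X]
    (f : X → X) (φ ψ : X → ℝ) (hf : Continuous f) (hφ : Continuous φ) (hψ : Continuous ψ)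
    (hpos : ∀ x, 0 < ψ x) :
    inducedPressure f φ ψ =
        sInf { b : EReal | ∃ β : ℝ, b = (β : EReal) ∧
          topPressure f (fun x => φ x - β * ψ x) ≤ 0 } ∧
    inducedPressure f φ ψ =
        sSup { b : EReal | ∃ β : ℝ, b = (β : EReal) ∧
          0 ≤ topPressure f (fun x => φ x - β * ψ x) } := by
  obtain ⟨x₁, -, hx₁⟩ := isCompact_univ.exists_isMinOn univ_nonempty hψ.continuousOn
  obtain ⟨x₂, -, hx₂⟩ := isCompact_univ.exists_isMaxOn univ_nonempty hψ.continuousOn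
  have hmψ : ∀ x, ψ x₁ ≤ ψ x := fun x => hx₁ (mem_univ x)
  have hψM : ∀ x, ψ x ≤ ψ x₂ := fun x => hx₂ (mem_univ x)
  set I := { b : EReal | ∃ β : ℝ, b = (β : EReal) ∧
    topPressure f (fun x => φ x - β * ψ x) ≤ 0 }
  set S := { b : EReal | ∃ β : ℝ, b = (β : EReal) ∧
    0 ≤ topPressure f (fun x => φ x - β * ψ x) }
  have hle : inducedPressure f φ ψ ≤ sInf I := by
    refine le_sInf ?_
    rintro _ ⟨β, rfl, hβ⟩
    refine EReal.le_of_forall_lt_iff_le.1 fun z hz => ?_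
    have hz' : β < z := by exact_mod_cast hz
    simpa using inducedPressure_le_add hf hφ hψ (hpos x₁) hmψ hψM (sub_pos.2 hz') hβ
  have hge : sSup S ≤ inducedPressure f φ ψ := by
    refine sSup_le ?_
    rintro _ ⟨β, rfl, hβ⟩
    by_contra! hlt
    obtain ⟨z, hz, hzβ⟩ := EReal.lt_iff_exists_real_btwn.1 hlt
    have hz' : z < β := by exact_mod_cast hzβ
    refine hβ.not_gt (topPressure_neg_of_inducedPressure_lt hf hφ hψ (hpos x₁) hmψ hψM
      (sub_pos.2 hz') ?_)
    simpa using hz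
  have hIS : sInf I ≤ sSup S := by
    refine EReal.le_of_forall_lt_iff_le.1 fun z hz => sInf_le ⟨z, rfl, ?_⟩
    by_contra! h
    exact hz.not_ge (le_sSup ⟨z, rfl, h.le⟩)
  exact ⟨hle.antisymm (hIS.trans hge), (hle.trans hIS).antisymm hge⟩
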